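/- The operators e_i' on U_q^-(g) satisfy the q-Serre relations: for i≠j, Σ_{k=0}^{b}(−1)^k (e_i')^{(k)} ∘ e_j' ∘ (e_i')^{(b−k)} = 0 as K-linear endomorphisms of U_q^-(g), where b=1−(α_i^∨,α_j) and (e_i')^{(k)} = (e_i')^k/[k]_i!. -/

import Mathlib

noncomputable section
open scoped BigOperators

abbrev KK : Type := RatFunc ℚ

def qq : KK := RatFunc.X

def qZ (n : ℤ) : KK := qq ^ n

def qInt (d : ℤ) (k : ℕ) : KK := (qq ^ (d * k) - qq ^ (-(d * k : ℤ))) / (qq ^ d - qq ^ (-d : ℤ))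

def qFact (d : ℤ) (k : ℕ) : KK := ∏ m ∈ Finset.range k, qInt d (m + 1)

variable {I : Type} [DecidableEq I]

/-- `b = 1 - (α_i^∨, α_j)` -/
def serreN (A : I → I → ℤ) (i j : I) : ℕ := (1 - 2 * A i j / A i i).toNat

def fSerre (A : I → I → ℤ) (i j : I) : FreeAlgebra KK I :=
  ∑ k ∈ Finset.range (serreN A i j + 1),
    ((-1 : KK) ^ k * (qFact (A i i / 2) k)⁻¹ * (qFact (A i i / 2) (serreN A i j - k))⁻¹) •
      ((FreeAlgebra.ι KK i) ^ k * FreeAlgebra.ι KK j * (FreeAlgebra.ι KK i) ^ (serreN A i j - k))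

inductive SerreRel (A : I → I → ℤ) : FreeAlgebra KK I → FreeAlgebra KK I → Prop
  | serre (i j : I) (h : i ≠ j) : SerreRel A (fSerre A i j) 0

abbrev Um (A : I → I → ℤ) : Type := RingQuot (SerreRel A)

def fgen (A : I → I → ℤ) (i : I) : Um A := RingQuot.mkAlgHom KK (SerreRel A) (FreeAlgebra.ι KK i)

def IsWt (A : I → I → ℤ) (ν : I →₀ ℕ) (a : Um A) : Prop :=
  a ∈ Submodule.span KK {x | ∃ L : List I, (∀ i, L.count i = ν i) ∧ x = (L.map (fgen A)).prod}

def IsCartan (A : I → I → ℤ) : Prop :=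
  (∀ i j, A i j = A j i) ∧ (∀ i, 0 < A i i) ∧ (∀ i, 2 ∣ A i i) ∧
  (∀ i j, i ≠ j → A i j ≤ 0) ∧ (∀ i j, A i i ∣ 2 * A i j)

def EprimRel (A : I → I → ℤ) (E : I → Module.End KK (Um A)) : Prop :=
  (∀ i, E i 1 = 0) ∧
  ∀ i j (a : Um A), E i (fgen A j * a) =
    (if i = j then a else 0) + qZ (-(A i j)) • (fgen A j * (E i a))

section Abstract
open Finset

structure QData {K : Type*} [Field K] (v w : K) (N r : ℕ → K) : Prop where
  vw : v * w = 1
  N0 : N 0 = 0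
  N1 : N 1 = 1
  Nadd : ∀ k l, N (k + l) = N k * v ^ l + N l * w ^ k
  Nne : ∀ k, N (k + 1) ≠ 0
  rrec : ∀ k, N (k + 1) * r (k + 1) = r k

variable {K : Type*} [Field K] {v w : K} {N r : ℕ → K}

lemma QData.vwpow (h : QData v w N r) (k : ℕ) : v ^ k * w ^ k = 1 := by
  rw [← mul_pow, h.vw, one_pow]

lemma QData.binom (h : QData v w N r) (n : ℕ) :
    ∑ p ∈ antidiagonal (n + 1), (-1 : K) ^ p.1 * r p.1 * r p.2 * (v ^ n) ^ p.2 = 0 := by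
  apply mul_left_cancel₀ (h.Nne n)
  rw [mul_zero, mul_sum]
  have e : ∀ p ∈ antidiagonal (n + 1),
      N (n + 1) * ((-1 : K) ^ p.1 * r p.1 * r p.2 * (v ^ n) ^ p.2) =
      (-1 : K) ^ p.1 * (N p.1 * r p.1) * r p.2 * (v ^ n) ^ p.2 * v ^ p.2 +
      (-1 : K) ^ p.1 * r p.1 * (N p.2 * r p.2) * (v ^ n) ^ p.2 * w ^ p.1 := by
    rintro ⟨k, l⟩ hp
    simp only [HasAntidiagonal.mem_antidiagonal] at hp
    rw [← hp, h.Nadd]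
    ring
  rw [sum_congr rfl e, sum_add_distrib, Nat.sum_antidiagonal_succ, Nat.sum_antidiagonal_succ']
  simp only [h.rrec, h.N0, zero_mul, mul_zero, zero_add, ← sum_add_distrib]
  apply sum_eq_zero
  rintro ⟨k, l⟩ hp
  simp only [HasAntidiagonal.mem_antidiagonal] at hp
  subst hp
  have := h.vwpow k
  have e2 : v ^ (k + l) * w ^ k = v ^ l := by
    rw [pow_add, mul_right_comm, this, one_mul]
  simp only
  rw [pow_succ (v ^ (k + l)) l]
  linear_combination ((-1) ^ k * r k * r l * (v ^ (k + l)) ^ l) * e2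

variable {R : Type*} [Ring R] [Algebra K R]

lemma pow_qcomm {E F : R} {x : K} (h : E * F = x • (F * E)) (k : ℕ) :
    E ^ k * F = x ^ k • (F * E ^ k) := by
  induction k with
  | zero => simp
  | succ k ih =>
    rw [pow_succ, mul_assoc, h, mul_smul_comm, ← mul_assoc, ih, smul_mul_assoc, smul_smul,
      ← pow_succ', mul_assoc]

lemma QData.pow_self (h : QData v w N r) {E F : R} (hE : E * F = 1 + w ^ 2 • (F * E)) (k : ℕ) :
    E ^ (k + 1) * F = w ^ (2 * (k + 1)) • (F * E ^ (k + 1)) + (w ^ k * N (k + 1)) • E ^ k := by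
  induction k with
  | zero => simp [hE, h.N1, add_comm]
  | succ k ih =>
    rw [pow_succ' E (k + 1), mul_assoc, ih, mul_add, mul_smul_comm, ← mul_assoc, hE, mul_smul_comm,
      add_mul, smul_add, one_mul, smul_mul_assoc, smul_smul, ← pow_succ', h.Nadd (k + 1) 1, h.N1,
      mul_assoc, ← pow_succ']
    have e : w ^ (k + 1) * (N (k + 1) * v ^ 1 + 1 * w ^ (k + 1)) =
        w ^ k * N (k + 1) + w ^ (2 * (k + 1)) := by
      linear_combination (w ^ k * N (k + 1)) * h.vw
    rw [e]
    module

lemma QData.pow_self' (h : QData v w N r) {E F : R} (hE : E * F = 1 + w ^ 2 • (F * E)) (k : ℕ) :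
    E ^ k * F = w ^ (2 * k) • (F * E ^ k) + (w ^ (k - 1) * N k) • E ^ (k - 1) := by
  cases k with
  | zero => simp [h.N0]
  | succ k => exact h.pow_self hE k

def serS (r : ℕ → K) (n : ℕ) (E G : R) : R :=
  ∑ p ∈ antidiagonal (n + 1), ((-1 : K) ^ p.1 * r p.1 * r p.2) • (E ^ p.1 * G * E ^ p.2)

lemma serS_other {n : ℕ} {E G F : R} {x y : K} (hE : E * F = x • (F * E))
    (hG : G * F = y • (F * G)) :
    serS r n E G * F = (x ^ (n + 1) * y) • (F * serS r n E G) := by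
  unfold serS
  rw [sum_mul, mul_sum, smul_sum]
  apply sum_congr rfl
  rintro ⟨k, l⟩ hp
  simp only [HasAntidiagonal.mem_antidiagonal] at hp
  simp only
  rw [← hp, smul_mul_assoc, mul_assoc (E ^ k * G), pow_qcomm hE, mul_smul_comm, mul_assoc (E ^ k) G, ← mul_assoc G, hG,
    smul_mul_assoc, mul_smul_comm, mul_assoc F, ← mul_assoc (E ^ k), pow_qcomm hE]
  simp only [smul_mul_assoc, mul_smul_comm, smul_smul, mul_assoc]
  congr 1
  ring

lemma QData.serS_j (h : QData v w N r) {n : ℕ} {E G F : R} {y : K}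
    (hE : E * F = v ^ n • (F * E)) (hG : G * F = 1 + y • (F * G)) :
    serS r n E G * F = ((v ^ n) ^ (n + 1) * y) • (F * serS r n E G) := by
  have e : serS r n E G * F = (∑ p ∈ antidiagonal (n + 1),
      (-1 : K) ^ p.1 * r p.1 * r p.2 * (v ^ n) ^ p.2) • E ^ (n + 1) +
      ((v ^ n) ^ (n + 1) * y) • (F * serS r n E G) := by
    unfold serS
    rw [sum_mul, mul_sum, smul_sum, sum_smul, ← sum_add_distrib]
    apply sum_congr rfl
    rintro ⟨k, l⟩ hp
    simp only [HasAntidiagonal.mem_antidiagonal] at hp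
    simp only
    generalize v ^ n = s at *
    rw [← hp, smul_mul_assoc, mul_assoc (E ^ k * G), pow_qcomm hE, mul_smul_comm, mul_assoc (E ^ k) G, ← mul_assoc G, hG,
      add_mul, mul_add, one_mul, ← pow_add,
      smul_mul_assoc, mul_smul_comm, mul_assoc F, ← mul_assoc (E ^ k) F, pow_qcomm hE]
    simp only [smul_mul_assoc, mul_smul_comm, smul_smul, mul_assoc, smul_add]
    congr 2
    ring
  rw [e, h.binom, zero_smul, zero_add]

lemma QData.serS_i (h : QData v w N r) {n : ℕ} {E G F : R}
    (hE : E * F = 1 + w ^ 2 • (F * E)) (hG : G * F = v ^ n • (F * G)) :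
    serS r n E G * F = (w ^ (2 * (n + 1)) * v ^ n) • (F * serS r n E G) := by
  have e : serS r n E G * F = (w ^ (2 * (n + 1)) * v ^ n) • (F * serS r n E G) +
      (∑ p ∈ antidiagonal (n + 1), ((-1 : K) ^ p.1 * (N p.1 * r p.1) * r p.2 *
          (w ^ (2 * p.2) * v ^ n * w ^ (p.1 - 1))) • (E ^ (p.1 - 1) * G * E ^ p.2) +
       ∑ p ∈ antidiagonal (n + 1), ((-1 : K) ^ p.1 * r p.1 * (N p.2 * r p.2) *
          w ^ (p.2 - 1)) • (E ^ p.1 * G * E ^ (p.2 - 1))) := by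
    unfold serS
    rw [sum_mul, mul_sum, smul_sum, ← sum_add_distrib, ← sum_add_distrib]
    apply sum_congr rfl
    rintro ⟨k, l⟩ hp
    simp only [HasAntidiagonal.mem_antidiagonal] at hp
    simp only
    generalize v ^ n = s at *
    rw [← hp, smul_mul_assoc, mul_assoc (E ^ k * G), h.pow_self' hE l, mul_add, mul_smul_comm, mul_smul_comm,
      mul_assoc (E ^ k) G, ← mul_assoc G F, hG, smul_mul_assoc, mul_smul_comm, mul_assoc F,
      ← mul_assoc (E ^ k) F, h.pow_self' hE k]
    simp only [smul_mul_assoc, mul_smul_comm, smul_smul, mul_assoc, smul_add, add_mul, add_assoc]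
    congr 2
    · ring
    · congr 1
      ring
    · ring_nf
  rw [e, Nat.sum_antidiagonal_succ, Nat.sum_antidiagonal_succ']
  simp only [h.rrec, h.N0, zero_mul, mul_zero, zero_add, zero_smul, ← sum_add_distrib,
    Nat.add_sub_cancel]
  rw [add_eq_left]
  apply sum_eq_zero
  rintro ⟨k, l⟩ hp
  simp only [HasAntidiagonal.mem_antidiagonal] at hp
  subst hp
  simp only
  rw [← add_smul]
  have : w ^ (2 * l) * v ^ (k + l) * w ^ k = w ^ l := by
    calc _ = w ^ l * (v ^ (k + l) * w ^ (k + l)) := by ring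
      _ = _ := by rw [h.vwpow, mul_one]
  rw [this]
  convert zero_smul K _ using 2
  ring

end Abstract

lemma qq_pow_ne {n : ℕ} (hn : n ≠ 0) : qq ^ n ≠ 1 := by
  intro h
  have : algebraMap (Polynomial ℚ) KK (Polynomial.X ^ n) = algebraMap (Polynomial ℚ) KK 1 := by
    simpa [qq] using h
  have h2 := RatFunc.algebraMap_injective ℚ this
  have h3 := congrArg Polynomial.natDegree h2
  simp at h3
  exact hn h3

lemma qq_ne : qq ≠ 0 := RatFunc.X_ne_zero

lemma qdata (d : ℕ) (hd : 0 < d) :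
    QData (qq ^ d) (qq ^ d)⁻¹ (qInt d) (fun k => (qFact d k)⁻¹) := by
  have hv : qq ^ d ≠ 0 := pow_ne_zero _ qq_ne
  have hN : ∀ k : ℕ, qInt d k =
      ((qq ^ d) ^ k - ((qq ^ d)⁻¹) ^ k) / (qq ^ d - (qq ^ d)⁻¹) := by
    intro k
    unfold qInt
    have : (d : ℤ) * k = ((d * k : ℕ) : ℤ) := by push_cast; rfl
    rw [zpow_neg, zpow_neg, this, zpow_natCast, zpow_natCast, inv_pow, pow_mul]
  have hne : ∀ k : ℕ, (qq ^ d) ^ (k + 1) - ((qq ^ d)⁻¹) ^ (k + 1) ≠ 0 := by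
    intro k hk
    rw [sub_eq_zero, inv_pow, ← mul_eq_one_iff_eq_inv₀ (pow_ne_zero _ hv), ← pow_mul, ← pow_add] at hk
    refine qq_pow_ne ?_ hk
    positivity
  have hden : qq ^ d - (qq ^ d)⁻¹ ≠ 0 := by simpa using hne 0
  have hNne : ∀ k : ℕ, qInt d (k + 1) ≠ 0 := by
    intro k
    rw [hN]
    exact div_ne_zero (hne k) hden
  refine ⟨mul_inv_cancel₀ hv, by simp [hN], by rw [hN]; simp [hden], ?_, hNne, ?_⟩
  · intro k l
    rw [hN, hN, hN]
    generalize (qq ^ d)⁻¹ = w at *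
    field_simp
    ring
  · intro k
    simp only [qFact, Finset.prod_range_succ]
    rw [mul_inv, mul_left_comm, mul_inv_cancel₀ (hNne k), mul_one]

theorem stmt1 (A : I → I → ℤ) (hA : IsCartan A)
    (E : I → Module.End KK (Um A)) (hE : EprimRel A E) :
    ∀ i j : I, i ≠ j →
      ∑ k ∈ Finset.range (serreN A i j + 1),
        ((-1 : KK) ^ k * (qFact (A i i / 2) k)⁻¹ * (qFact (A i i / 2) (serreN A i j - k))⁻¹) •
          ((E i) ^ k * E j * (E i) ^ (serreN A i j - k)) = 0 := by
  intro i j hij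
  obtain ⟨hsym, hpos, heven, hneg, hdvd⟩ := hA
  obtain ⟨d, hd⟩ : ∃ d : ℕ, A i i = 2 * d := by
    obtain ⟨c, hc⟩ := heven i
    have := hpos i
    exact ⟨c.toNat, by omega⟩
  have hdpos : 0 < d := by have := hpos i; omega
  obtain ⟨n, hn⟩ : ∃ n : ℕ, A i j = - (n * d) := by
    obtain ⟨c, hc⟩ := hdvd i j
    have h1 := hneg i j hij
    have h2 : A i j = d * c := by rw [hd] at hc; linarith
    have h3 : c ≤ 0 := by
      by_contra h
      have : 0 < (d : ℤ) * c := by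
        have : (0 : ℤ) < d := by exact_mod_cast hdpos
        have : 0 < c := by omega
        positivity
      omega
    refine ⟨(-c).toNat, ?_⟩
    rw [Int.toNat_of_nonneg (by omega), h2]
    ring
  have hb : serreN A i j = n + 1 := by
    unfold serreN
    have hdz : (2 * (d : ℤ)) ≠ 0 := by omega
    have : 2 * A i j / A i i = -n := by
      rw [hd, hn]
      apply Int.ediv_eq_of_eq_mul_right hdz
      ring
    rw [this]
    omega
  have hd2 : A i i / 2 = (d : ℤ) := by omega
  have Q := qdata d hdpos
  rw [hb, hd2]
  set r : ℕ → KK := fun k => (qFact d k)⁻¹ with hr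
  have hS : ∑ k ∈ Finset.range (n + 1 + 1),
        ((-1 : KK) ^ k * (qFact d k)⁻¹ * (qFact d (n + 1 - k))⁻¹) •
          ((E i) ^ k * E j * (E i) ^ (n + 1 - k)) = serS r n (E i) (E j) := by
    unfold serS
    rw [Finset.Nat.sum_antidiagonal_eq_sum_range_succ_mk]
  rw [hS]
  obtain ⟨hE1, hE2⟩ := hE
  let L : I → Module.End KK (Um A) := fun l => LinearMap.mulLeft KK (fgen A l)
  have hL0 : ∀ k l, k ≠ l → E k * L l = qZ (-(A k l)) • (L l * E k) := by
    intro k l hkl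
    ext a
    simp [L, hE2, hkl]
  have hL1 : ∀ k, E k * L k = 1 + qZ (-(A k k)) • (L k * E k) := by
    intro k
    ext a
    simp [L, hE2]
  have hqs : qZ (-(A i j)) = (qq ^ d) ^ n := by
    rw [hn, qZ, ← pow_mul, neg_neg, mul_comm, ← Nat.cast_mul, zpow_natCast]
  have hqi : qZ (-(A i i)) = ((qq ^ d)⁻¹) ^ 2 := by
    have : (2 * d : ℤ) = ((d * 2 : ℕ) : ℤ) := by push_cast; ring
    rw [hd, qZ, zpow_neg, this, zpow_natCast, inv_pow, pow_mul]
  have key : ∀ l, ∃ c : KK, serS r n (E i) (E j) * L l = c • (L l * serS r n (E i) (E j)) := by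
    intro l
    by_cases hli : i = l
    · subst hli
      refine ⟨_, Q.serS_i (hqi ▸ hL1 i) ?_⟩
      rw [hL0 j i hij.symm, hsym j i, hqs]
    by_cases hlj : j = l
    · subst hlj
      exact ⟨_, Q.serS_j (hqs ▸ hL0 i j hij) (hL1 j)⟩
    exact ⟨_, serS_other (hL0 i l hli) (hL0 j l hlj)⟩
  have S1 : serS r n (E i) (E j) 1 = 0 := by
    unfold serS
    rw [LinearMap.sum_apply]
    apply Finset.sum_eq_zero
    rintro ⟨k, l⟩ -
    cases l with
    | zero => simp [hE1]
    | succ l => simp [hE1, pow_succ]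
  generalize serS r n (E i) (E j) = S at *
  have main : ∀ (x : FreeAlgebra KK I) (a : Um A), S a = 0 →
      S (RingQuot.mkAlgHom KK (SerreRel A) x * a) = 0 := by
    intro x
    induction x using FreeAlgebra.induction with
    | grade0 c =>
      intro a ha
      rw [AlgHom.commutes, ← Algebra.smul_def, map_smul, ha, smul_zero]
    | grade1 l =>
      intro a ha
      obtain ⟨c, hc⟩ := key l
      have := LinearMap.congr_fun hc a
      simpa [L, ha, fgen] using this
    | mul x y hx hy =>
      intro a ha
      rw [map_mul (RingQuot.mkAlgHom KK (SerreRel A)), mul_assoc]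
      exact hx _ (hy _ ha)
    | add x y hx hy =>
      intro a ha
      rw [map_add, add_mul, map_add, hx _ ha, hy _ ha, add_zero]
  ext a
  obtain ⟨x, rfl⟩ := RingQuot.mkAlgHom_surjective KK (SerreRel A) a
  simpa using main x 1 S1
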